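/- Let K be a compact Hausdorff space such that every subset of K is a Borel set. If the Borel σ-algebra generated by the weak-star topology on C*(K) coincides with the Borel σ-algebra generated by the weak topology on C*(K), then the Borel σ-algebra generated by the weak-star topology coincides with the Borel σ-algebra generated by the dual norm topology, i.e. Bo(C*(K), w*) = Bo(C*(K), w) implies Bo(C*(K), w*) = Bo(C*(K), ‖·‖). -/

import Mathlib

open NormedSpace MeasureTheory

/-- The weak-star topology on the dual of a normed space `E`: the topology of
pointwise convergence on `E`. -/
noncomputable def weakStarTopology (E : Type*) [NormedAddCommGroup E] [NormedSpace ℝ E] :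
    TopologicalSpace (StrongDual ℝ E) :=
  TopologicalSpace.induced (fun μ : StrongDual ℝ E => (μ : E → ℝ)) Pi.topologicalSpace

/-- The weak topology on a normed space `E`: the topology induced by its topological dual. -/
noncomputable def weakTopology (E : Type*) [NormedAddCommGroup E] [NormedSpace ℝ E] :
    TopologicalSpace E :=
  TopologicalSpace.induced (fun x : E => fun Λ : StrongDual ℝ E => Λ x) Pi.topologicalSpace

open Set Topology Filter
open scoped ENNReal NNReal Pointwise

/-! A nonzero diffuse Radon measure on `K` cannot measure every subset: countably many continuous
functions push it forward to a diffuse measure on a Polish space, whose distribution function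
carries it to Lebesgue measure on `[0, 1]`, where there is Vitali's set. So if all subsets of `K`
are Borel, then all Radon measures on `K` are purely atomic, and by the Riesz representation theorem
`C*(K)` is isometric to `ℓ¹(K)`. The norm of `ℓ¹` has the Kadec property: weak convergence and
convergence of norms imply norm convergence. Since any norm is weakly lower semicontinuous, it
follows that the weak and norm Borel σ-algebras of `C*(K)` coincide. -/

section NullMeasurable

lemma nullMeasurableSet_of_measure_add_measure_compl_le {X : Type*} [MeasurableSpace X]
    {μ : Measure X} [IsFiniteMeasure μ] {s : Set X} (h : μ s + μ sᶜ ≤ μ univ) :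
    NullMeasurableSet s μ := by
  set t := toMeasurable μ s
  set u := toMeasurable μ sᶜ
  have hs : s ⊆ t := subset_toMeasurable μ s
  have hsc : sᶜ ⊆ u := subset_toMeasurable μ sᶜ
  have hunion : t ∪ u = univ :=
    univ_subset_iff.1 ((union_compl_self s).symm.subset.trans (union_subset_union hs hsc))
  have hinter : μ (t ∩ u) = 0 := by
    have hadd := measure_union_add_inter (μ := μ) t (measurableSet_toMeasurable μ sᶜ)
    rw [hunion, measure_toMeasurable, measure_toMeasurable] at hadd
    exact nonpos_iff_eq_zero.1 ((ENNReal.add_le_add_iff_left (measure_ne_top μ univ)).1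
      (by rwa [hadd, add_zero]))
  refine (measurableSet_toMeasurable μ s).nullMeasurableSet.congr (ae_eq_set.2 ⟨?_, ?_⟩)
  · exact measure_mono_null (inter_subset_inter_right t hsc) hinter
  · rw [sdiff_eq_empty.2 hs, measure_empty]

lemma map_apply_le_of_nullMeasurableSet_preimage {X Y : Type*} [TopologicalSpace X]
    [T2Space X] [MeasurableSpace X] [OpensMeasurableSpace X] [TopologicalSpace Y] [T2Space Y]
    [MeasurableSpace Y] [BorelSpace Y] {μ : Measure X} [IsFiniteMeasure μ] [μ.InnerRegular]
    {f : X → Y} (hf : Continuous f) {s : Set Y} (hs : NullMeasurableSet (f ⁻¹' s) μ) :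
    μ.map f s ≤ μ (f ⁻¹' s) := by
  obtain ⟨E, hEs, hE, hE_ae⟩ := hs.compl.exists_measurable_subset_ae_eq
  refine ENNReal.le_of_forall_pos_le_add fun ε hε _ ↦ ?_
  obtain ⟨C, hCE, hC, hμC⟩ := hE.exists_isCompact_sdiff_lt (measure_ne_top μ E)
    (ENNReal.coe_ne_zero.2 hε.ne')
  have hs_sub : s ⊆ (f '' C)ᶜ := by
    rw [subset_compl_comm]
    exact image_subset_iff.2 (hCE.trans hEs)
  have hC_sub : f ⁻¹' (f '' C)ᶜ ⊆ Eᶜ ∪ E \ C := by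
    intro x hx
    by_cases hxE : x ∈ E
    · exact Or.inr ⟨hxE, fun hxC ↦ hx (mem_image_of_mem f hxC)⟩
    · exact Or.inl hxE
  have hE_compl : μ Eᶜ = μ (f ⁻¹' s) := by
    simpa using measure_congr hE_ae.compl
  calc μ.map f s ≤ μ.map f (f '' C)ᶜ := measure_mono hs_sub
    _ = μ (f ⁻¹' (f '' C)ᶜ) :=
      Measure.map_apply hf.measurable (hC.image hf).measurableSet.compl
    _ ≤ μ Eᶜ + μ (E \ C) := (measure_mono hC_sub).trans (measure_union_le _ _)
    _ ≤ μ (f ⁻¹' s) + ε := by rw [hE_compl]; gcongr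

lemma nullMeasurableSet_map_of_continuous {X Y : Type*} [TopologicalSpace X]
    [T2Space X] [MeasurableSpace X] [OpensMeasurableSpace X] [TopologicalSpace Y] [T2Space Y]
    [MeasurableSpace Y] [BorelSpace Y] {μ : Measure X} [IsFiniteMeasure μ] [μ.InnerRegular]
    {f : X → Y} (hf : Continuous f) {s : Set Y} (hs : NullMeasurableSet (f ⁻¹' s) μ) :
    NullMeasurableSet s (μ.map f) := by
  apply nullMeasurableSet_of_measure_add_measure_compl_le
  calc μ.map f s + μ.map f sᶜ ≤ μ (f ⁻¹' s) + μ (f ⁻¹' s)ᶜ :=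
        add_le_add (map_apply_le_of_nullMeasurableSet_preimage hf hs)
          (map_apply_le_of_nullMeasurableSet_preimage hf hs.compl)
    _ = μ.map f univ := by
      rw [measure_add_measure_compl₀ hs, Measure.map_apply hf.measurable .univ, preimage_univ]

lemma nullMeasurableSet_map_of_measurableEmbedding {X Y : Type*} [MeasurableSpace X]
    [MeasurableSpace Y] {μ : Measure X} [IsFiniteMeasure μ] {f : X → Y}
    (hf : MeasurableEmbedding f) {s : Set Y} (hs : NullMeasurableSet (f ⁻¹' s) μ) :
    NullMeasurableSet s (μ.map f) := by
  apply nullMeasurableSet_of_measure_add_measure_compl_le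
  simp only [hf.map_apply, preimage_compl, preimage_univ]
  exact (measure_add_measure_compl₀ hs).le

end NullMeasurable

section Vitali

lemma exists_vitali_set :
    ∃ V ⊆ Icc (0 : ℝ) 1, ∀ x : ℝ, ∃! q : ℚ, x + q ∈ V := by
  let Q : AddSubgroup ℝ := (algebraMap ℚ ℝ).toAddMonoidHom.range
  have hQ_mem (q : ℚ) : (q : ℝ) ∈ Q := ⟨q, rfl⟩
  let rep : ℝ ⧸ Q → ℝ := fun c ↦ Int.fract c.out
  have hrep (c : ℝ ⧸ Q) : (rep c : ℝ ⧸ Q) = c := by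
    have hout : ((c.out : ℝ) : ℝ ⧸ Q) = c := Quotient.out_eq' c
    refine (QuotientAddGroup.eq.2 ?_).trans hout
    have hfloor : -rep c + c.out = ((⌊c.out⌋ : ℚ) : ℝ) := by
      rw [Rat.cast_intCast, neg_add_eq_sub, Int.self_sub_fract]
    rw [hfloor]
    exact hQ_mem _
  refine ⟨range rep, ?_, fun x ↦ ?_⟩
  · rintro _ ⟨c, rfl⟩
    exact ⟨Int.fract_nonneg _, (Int.fract_lt_one _).le⟩
  · obtain ⟨q, hq : (q : ℝ) = -x + rep x⟩ := QuotientAddGroup.eq.1 (hrep x).symm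
    refine ⟨q, ⟨x, by rw [hq]; ring⟩, ?_⟩
    rintro p ⟨c, hc⟩
    have hcx : c = (x : ℝ ⧸ Q) := by
      rw [← hrep c, hc, eq_comm, QuotientAddGroup.eq]
      simpa using hQ_mem p
    have hpq : (p : ℝ) = q := by rw [hq, ← hcx, hc]; ring
    exact_mod_cast hpq

lemma not_nullMeasurableSet_of_existsUnique_add_ratCast_mem {V : Set ℝ}
    (hV : ∀ x : ℝ, ∃! q : ℚ, x + q ∈ V) : ¬ NullMeasurableSet V volume := by
  intro hV_meas
  obtain ⟨E, hEV, hE, hE_ae⟩ := hV_meas.exists_measurable_subset_ae_eq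
  have hdiff : ∀ q : ℚ, (q : ℝ) ∈ E - E → q = 0 := by
    rintro q ⟨x, hx, y, hy, hxy : x - y = q⟩
    refine (hV y).unique ?_ ?_
    · rw [← hxy, add_sub_cancel]
      exact hEV hx
    · simpa using hEV hy
  have hE_null : volume E = 0 := by
    by_contra hE_pos
    have hnhds : E - E ∈ 𝓝 (0 : ℝ) :=
      Measure.sub_mem_nhds_zero_of_addHaar_pos volume E hE (pos_iff_ne_zero.2 hE_pos)
    obtain ⟨ε, hε, hball⟩ := Metric.mem_nhds_iff.1 hnhds
    obtain ⟨q, hq_pos, hqε⟩ := exists_rat_btwn hε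
    have hq_mem : (q : ℝ) ∈ E - E :=
      hball (by rwa [mem_ball_zero_iff, Real.norm_of_nonneg hq_pos.le])
    exact hq_pos.ne' (by rw [hdiff q hq_mem, Rat.cast_zero])
  have hV_null : volume V = 0 := by rw [← measure_congr hE_ae, hE_null]
  have hcover : (univ : Set ℝ) ⊆ ⋃ q : ℚ, (· + (q : ℝ)) ⁻¹' V := fun x _ ↦
    mem_iUnion.2 (hV x).exists
  have huniv : volume (univ : Set ℝ) = 0 := measure_mono_null hcover <|
    measure_iUnion_null fun q ↦ by rw [measure_preimage_add_right, hV_null]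
  simp at huniv

lemma exists_not_nullMeasurableSet_restrict_Icc :
    ∃ s : Set ℝ, ¬ NullMeasurableSet s (volume.restrict (Icc 0 1)) := by
  obtain ⟨V, hV_sub, hV⟩ := exists_vitali_set
  refine ⟨V, fun hV_meas ↦ not_nullMeasurableSet_of_existsUnique_add_ratCast_mem hV ?_⟩
  rwa [nullMeasurableSet_restrict measurableSet_Icc.nullMeasurableSet,
    inter_eq_left.2 hV_sub] at hV_meas

end Vitali

section ProbabilityIntegralTransform

open ProbabilityTheory

variable (μ : Measure ℝ) [IsProbabilityMeasure μ] [NullSingletonClass μ]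

lemma continuous_cdf : Continuous (cdf μ) := by
  refine continuous_iff_continuousAt.2 fun x ↦ ?_
  have hatom : (cdf μ).measure {x} = 0 := by rw [measure_cdf, measure_singleton]
  rw [StieltjesFunction.measure_singleton, ENNReal.ofReal_eq_zero, sub_nonpos] at hatom
  rw [(cdf μ).mono.continuousAt_iff_leftLim_eq_rightLim, (cdf μ).rightLim_eq]
  exact ((cdf μ).mono.leftLim_le le_rfl).antisymm hatom

lemma measure_cdf_preimage_Iic {t : ℝ} (ht₀ : 0 ≤ t) (ht₁ : t < 1) :
    μ (cdf μ ⁻¹' Iic t) = ENNReal.ofReal t := by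
  have hcont := continuous_cdf μ
  have hsurj {s : ℝ} (hs₀ : 0 < s) (hs₁ : s < 1) : ∃ x, cdf μ x = s :=
    mem_range_of_exists_le_of_exists_ge hcont
      ((tendsto_cdf_atBot μ).eventually_le_const hs₀).exists
      ((tendsto_cdf_atTop μ).eventually_const_le hs₁).exists
  apply le_antisymm
  · refine ENNReal.le_of_forall_pos_le_add fun ε hε _ ↦ ?_
    obtain ⟨s, hts, hs⟩ := exists_between (lt_min ht₁ (lt_add_of_pos_right t (NNReal.coe_pos.2 hε)))
    obtain ⟨x, hx⟩ := hsurj (ht₀.trans_lt hts) (hs.trans_le (min_le_left _ _))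
    have hsub : cdf μ ⁻¹' Iic t ⊆ Iic x := fun y hy ↦
      ((cdf μ).mono.reflect_lt ((mem_Iic.1 hy).trans_lt (hts.trans_eq hx.symm))).le
    calc μ (cdf μ ⁻¹' Iic t) ≤ μ (Iic x) := measure_mono hsub
      _ = ENNReal.ofReal s := by rw [← ofReal_cdf, hx]
      _ ≤ ENNReal.ofReal (t + ε) := ENNReal.ofReal_le_ofReal (hs.le.trans (min_le_right _ _))
      _ ≤ ENNReal.ofReal t + ε :=
        ENNReal.ofReal_add_le.trans_eq (by rw [ENNReal.ofReal_coe_nnreal])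
  · rcases ht₀.eq_or_lt with rfl | ht_pos
    · simp
    · obtain ⟨x, hx⟩ := hsurj ht_pos ht₁
      rw [← hx, ofReal_cdf]
      exact measure_mono fun y hy ↦ (cdf μ).mono hy

lemma map_cdf : μ.map (cdf μ) = volume.restrict (Icc 0 1) := by
  have hmeas : Measurable (cdf μ) := (continuous_cdf μ).measurable
  have : IsProbabilityMeasure (μ.map (cdf μ)) :=
    Measure.isProbabilityMeasure_map hmeas.aemeasurable
  refine Measure.ext_of_Iic _ _ fun t ↦ ?_
  rw [Measure.map_apply hmeas measurableSet_Iic, Measure.restrict_apply measurableSet_Iic]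
  rcases lt_or_ge t 0 with ht₀ | ht₀
  · have hpre : cdf μ ⁻¹' Iic t = ∅ :=
      eq_empty_of_forall_notMem fun x hx ↦ ((mem_Iic.1 hx).trans_lt ht₀).not_ge (cdf_nonneg μ x)
    have hinter : Iic t ∩ Icc 0 1 = ∅ :=
      eq_empty_of_forall_notMem fun x hx ↦ (hx.2.1.trans hx.1).not_gt ht₀
    rw [hpre, hinter, measure_empty, measure_empty]
  rcases lt_or_ge t 1 with ht₁ | ht₁
  · have hinter : Iic t ∩ Icc 0 1 = Icc 0 t := by
      ext x
      exact ⟨fun hx ↦ ⟨hx.2.1, hx.1⟩, fun hx ↦ ⟨hx.2, hx.1, hx.2.trans ht₁.le⟩⟩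
    rw [measure_cdf_preimage_Iic μ ht₀ ht₁, hinter, Real.volume_Icc, sub_zero]
  · have hpre : cdf μ ⁻¹' Iic t = univ :=
      eq_univ_of_forall fun x ↦ (cdf_le_one μ x).trans ht₁
    rw [hpre, inter_eq_right.2 (Icc_subset_Iic_self.trans (Iic_subset_Iic.2 ht₁)), measure_univ,
      Real.volume_Icc, sub_zero, ENNReal.ofReal_one]

end ProbabilityIntegralTransform

section DiffuseMeasures

lemma exists_not_nullMeasurableSet_real (μ : Measure ℝ) [IsProbabilityMeasure μ]
    [NullSingletonClass μ] : ∃ s, ¬ NullMeasurableSet s μ := by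
  obtain ⟨s, hs⟩ := exists_not_nullMeasurableSet_restrict_Icc
  rw [← map_cdf μ] at hs
  exact ⟨_, mt (nullMeasurableSet_map_of_continuous (continuous_cdf μ)) hs⟩

lemma nullSingletonClass_map_of_injective {X Y : Type*} [MeasurableSpace X] [MeasurableSpace Y]
    [MeasurableSingletonClass Y] {μ : Measure X} [NullSingletonClass μ] {f : X → Y}
    (hf : Measurable f) (hf_inj : f.Injective) : NullSingletonClass (μ.map f) where
  measure_singleton y := by
    rw [Measure.map_apply hf (measurableSet_singleton y)]
    exact (subsingleton_singleton.preimage hf_inj).measure_zero μ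

lemma exists_not_nullMeasurableSet {X : Type*} [MeasurableSpace X] [StandardBorelSpace X]
    {μ : Measure X} [SFinite μ] [NullSingletonClass μ] (hμ : μ ≠ 0) :
    ∃ s, ¬ NullMeasurableSet s μ := by
  have : NeZero μ := ⟨hμ⟩
  obtain ⟨e, he⟩ := exists_measurableEmbedding_real X
  have : NullSingletonClass μ.toFinite :=
    ⟨fun x ↦ toFinite_absolutelyContinuous μ (measure_singleton x)⟩
  have : NullSingletonClass (μ.toFinite.map e) :=
    nullSingletonClass_map_of_injective he.measurable he.injective
  have : IsProbabilityMeasure (μ.toFinite.map e) :=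
    Measure.isProbabilityMeasure_map he.measurable.aemeasurable
  obtain ⟨s, hs⟩ := exists_not_nullMeasurableSet_real (μ.toFinite.map e)
  exact ⟨e ⁻¹' s, fun hs' ↦ hs (nullMeasurableSet_map_of_measurableEmbedding he
    (hs'.mono_ac (toFinite_absolutelyContinuous μ)))⟩

end DiffuseMeasures

section RadonMeasures

variable {K : Type*} [TopologicalSpace K] [CompactSpace K] [T2Space K] [MeasurableSpace K]

lemma exists_continuous_pos_measure_lt {X : Type*} [TopologicalSpace X] [NormalSpace X] [T1Space X]
    [MeasurableSpace X] (μ : Measure X) [μ.OuterRegular] [NullSingletonClass μ] (x : X)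
    {ε : ℝ≥0∞} (hε : ε ≠ 0) : ∃ f : C(X, ℝ), 0 < f x ∧ μ {y | 0 < f y} < ε := by
  obtain ⟨U, hxU, hU, hμU⟩ := Set.exists_isOpen_lt_of_lt (μ := μ) {x} ε
    (by rwa [measure_singleton, pos_iff_ne_zero])
  obtain ⟨f, hf₀, hf₁, -⟩ := exists_continuous_zero_one_of_isClosed hU.isClosed_compl
    (isClosed_singleton (x := x)) (disjoint_compl_left_iff_subset.2 hxU)
  have hfx : f x = 1 := hf₁ rfl
  refine ⟨f, hfx ▸ one_pos, (measure_mono fun y hy ↦ ?_).trans_lt hμU⟩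
  by_contra hyU
  exact hy.ne' (hf₀ hyU)

lemma exists_finite_continuous_pos_measure_lt (μ : Measure K) [μ.OuterRegular]
    [NullSingletonClass μ] {ε : ℝ≥0∞} (hε : ε ≠ 0) : ∃ S : Set C(K, ℝ), S.Finite ∧
      ∀ y, ∃ f ∈ S, 0 < f y ∧ μ {w | 0 < f w} < ε := by
  choose f hf_pos hf_lt using fun x ↦ exists_continuous_pos_measure_lt μ x hε
  obtain ⟨t, ht⟩ := isCompact_univ.elim_finite_subcover (fun x ↦ {y | 0 < f x y})
    (fun x ↦ isOpen_lt continuous_const (f x).continuous)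
    (fun x _ ↦ mem_iUnion.2 ⟨x, hf_pos x⟩)
  refine ⟨f '' t, t.finite_toSet.image f, fun y ↦ ?_⟩
  obtain ⟨x, hxt, hxy⟩ := mem_iUnion₂.1 (ht (mem_univ y))
  exact ⟨f x, mem_image_of_mem f hxt, hxy, hf_lt x⟩

lemma exists_countable_measure_forall_eq_eq_zero (μ : Measure K) [μ.OuterRegular]
    [NullSingletonClass μ] : ∃ S : Set C(K, ℝ), S.Countable ∧
      ∀ y, μ {w | ∀ f ∈ S, f w = f y} = 0 := by
  choose S hS_fin hS using fun n : ℕ ↦ exists_finite_continuous_pos_measure_lt μ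
    (ENNReal.inv_ne_zero.2 (ENNReal.natCast_ne_top n))
  refine ⟨⋃ n, S n, countable_iUnion fun n ↦ (hS_fin n).countable, fun y ↦ ?_⟩
  by_contra hy
  obtain ⟨n, hn⟩ := ENNReal.exists_inv_nat_lt hy
  obtain ⟨f, hfS, hf_pos, hf_lt⟩ := hS n y
  refine (hn.trans_le (measure_mono fun w hw ↦ ?_)).not_gt hf_lt
  rw [mem_ofPred_eq, hw f (mem_iUnion.2 ⟨n, hfS⟩)]
  exact hf_pos

variable [BorelSpace K]

lemma exists_not_nullMeasurableSet_of_regular {μ : Measure K} [μ.Regular] [NullSingletonClass μ]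
    (hμ : μ ≠ 0) : ∃ s, ¬ NullMeasurableSet s μ := by
  obtain ⟨S, hS, hS_fibre⟩ := exists_countable_measure_forall_eq_eq_zero μ
  have : Countable S := hS
  let ev : K → S → ℝ := fun x f ↦ f.1 x
  have hev : Continuous ev := continuous_pi fun f ↦ f.1.continuous
  have : NullSingletonClass (μ.map ev) := by
    refine ⟨fun z ↦ ?_⟩
    rw [Measure.map_apply hev.measurable (measurableSet_singleton z)]
    rcases (ev ⁻¹' {z}).eq_empty_or_nonempty with hempty | ⟨y, rfl⟩
    · rw [hempty, measure_empty]
    · exact measure_mono_null (fun w hw f hf ↦ congrFun hw ⟨f, hf⟩) (hS_fibre y)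
  obtain ⟨s, hs⟩ := exists_not_nullMeasurableSet (μ := μ.map ev)
    (by rwa [Ne, Measure.map_eq_zero_iff hev.measurable.aemeasurable])
  exact ⟨ev ⁻¹' s, mt (nullMeasurableSet_map_of_continuous hev) hs⟩

/-- A measure is purely atomic if it lives on its set of atoms. Atoms are taken to be points of
positive measure, which is the right notion for Radon measures. -/
def IsPurelyAtomic {X : Type*} [MeasurableSpace X] (μ : Measure X) : Prop :=
  μ {x | μ {x} = 0} = 0

lemma countable_setOf_measure_singleton_ne_zero {X : Type*} [MeasurableSpace X]
    [MeasurableSingletonClass X] (μ : Measure X) [SFinite μ] : {x | μ {x} ≠ 0}.Countable := by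
  simp_rw [← pos_iff_ne_zero]
  exact Measure.countable_meas_pos_of_disjoint_iUnion (fun x ↦ measurableSet_singleton x)
    fun x y hxy ↦ disjoint_singleton.2 hxy

lemma isPurelyAtomic_of_forall_nullMeasurableSet {μ : Measure K} [μ.Regular]
    (hμ : ∀ s, NullMeasurableSet s μ) : IsPurelyAtomic μ := by
  set D : Set K := {x | μ {x} = 0}
  have : (μ.restrict D).Regular := Measure.Regular.restrict_of_measure_ne_top (measure_ne_top _ _)
  have : NullSingletonClass (μ.restrict D) := by
    refine ⟨fun x ↦ ?_⟩
    rw [Measure.restrict_apply (measurableSet_singleton x)]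
    by_cases hx : x ∈ D
    · exact measure_mono_null inter_subset_left hx
    · rw [singleton_inter_eq_empty.2 hx, measure_empty]
  rw [IsPurelyAtomic, ← Measure.restrict_eq_zero]
  by_contra hne
  obtain ⟨s, hs⟩ := exists_not_nullMeasurableSet_of_regular hne
  exact hs ((hμ s).mono_ac Measure.absolutelyContinuous_restrict)

lemma IsPurelyAtomic.hasSum_integral {X E : Type*} [MeasurableSpace X]
    [MeasurableSingletonClass X] [NormedAddCommGroup E] [NormedSpace ℝ E] [CompleteSpace E]
    {μ : Measure X} [SFinite μ] (hμ : IsPurelyAtomic μ) {f : X → E} (hf : Integrable f μ) :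
    HasSum (fun x ↦ μ.real {x} • f x) (∫ x, f x ∂μ) := by
  set A : Set X := {x | μ {x} ≠ 0}
  have : Countable A := countable_setOf_measure_singleton_ne_zero μ
  have hA : (⋃ x : A, {(x : X)}) = A := iUnion_of_singleton_coe A
  have hμA : μ.restrict A = μ := Measure.restrict_eq_self_of_ae_mem (measure_mono_null
    (fun x (hx : ¬ x ∈ A) ↦ not_not.1 hx) hμ)
  have hsum : HasSum (fun x : A ↦ μ.real {(x : X)} • f x) (∫ x, f x ∂μ) := by
    have := hasSum_integral_iUnion (fun x : A ↦ measurableSet_singleton (x : X))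
      (fun x y hxy ↦ disjoint_singleton.2 (Subtype.coe_injective.ne hxy)) hf.integrableOn
    simpa only [hA, hμA, integral_singleton] using this
  refine (hasSum_subtype_iff_of_support_subset (f := fun x ↦ μ.real {x} • f x)
    fun x hx ↦ ?_).1 hsum
  exact fun hx₀ ↦ hx (by simp [Measure.real, hx₀])

end RadonMeasures

section PositivePart

variable {E : Type*} [AddCommGroup E] [Lattice E]

lemma Icc_zero_add_Icc_zero [IsOrderedAddMonoid E] {x y : E} (hx : 0 ≤ x) (hy : 0 ≤ y) :
    Icc 0 x + Icc 0 y = Icc 0 (x + y) := by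
  refine Subset.antisymm ?_ fun z hz ↦ ?_
  · simpa using Icc_add_Icc_subset 0 x 0 y
  · have hsub : z - z ⊓ x ≤ y := by
      rw [sub_le_iff_le_add, add_inf]
      exact le_inf (le_add_of_nonneg_left hy) (hz.2.trans_eq (add_comm x y))
    exact ⟨z ⊓ x, ⟨le_inf hz.1 hx, inf_le_right⟩, z - z ⊓ x, ⟨sub_nonneg.2 inf_le_left, hsub⟩,
      add_sub_cancel _ _⟩

variable [Module ℝ E]

/-- The value at `x ≥ 0` of the positive part `φ⁺` of a linear functional on a Riesz space, given
by the Riesz–Kantorovich formula. Only its values on the positive cone are meaningful. -/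
noncomputable def rieszKantorovich (φ : E →ₗ[ℝ] ℝ) (x : E) : ℝ :=
  sSup (φ '' Icc 0 x)

variable {φ : E →ₗ[ℝ] ℝ}

lemma le_rieszKantorovich {x y : E} (hφ : BddAbove (φ '' Icc 0 x)) (hy : y ∈ Icc 0 x) :
    φ y ≤ rieszKantorovich φ x :=
  le_csSup hφ (mem_image_of_mem φ hy)

lemma rieszKantorovich_add [IsOrderedAddMonoid E] {x y : E} (hx : 0 ≤ x) (hy : 0 ≤ y)
    (hφx : BddAbove (φ '' Icc 0 x)) (hφy : BddAbove (φ '' Icc 0 y)) :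
    rieszKantorovich φ (x + y) = rieszKantorovich φ x + rieszKantorovich φ y := by
  rw [rieszKantorovich, ← Icc_zero_add_Icc_zero hx hy, image_add,
    csSup_add ((nonempty_Icc.2 hx).image φ) hφx ((nonempty_Icc.2 hy).image φ) hφy]
  rfl

lemma rieszKantorovich_smul [PosSMulMono ℝ E] (φ : E →ₗ[ℝ] ℝ) {c : ℝ} (hc : 0 ≤ c) (x : E) :
    rieszKantorovich φ (c • x) = c * rieszKantorovich φ x := by
  rcases hc.eq_or_lt with rfl | hc_pos
  · simp [rieszKantorovich]
  · have hIcc : Icc 0 (c • x) = c • Icc 0 x := by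
      simpa using ((OrderIso.smulRight hc_pos).image_Icc (0 : E) x).symm
    rw [rieszKantorovich, hIcc, image_smul_set, Real.sSup_smul_of_nonneg hc, smul_eq_mul,
      rieszKantorovich]

end PositivePart

section RieszRepresentation

variable {K : Type*} [TopologicalSpace K] [CompactSpace K]

lemma bddAbove_image_Icc_zero (φ : StrongDual ℝ C(K, ℝ)) (f : C(K, ℝ)) :
    BddAbove (φ '' Icc 0 f) := by
  refine ⟨‖φ‖ * ‖f‖, ?_⟩
  rintro _ ⟨g, hg, rfl⟩
  have hgf : ‖g‖ ≤ ‖f‖ := by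
    refine (ContinuousMap.norm_le g (norm_nonneg f)).2 fun x ↦ ?_
    have hgx : 0 ≤ g x := hg.1 x
    rw [Real.norm_of_nonneg hgx]
    exact (hg.2 x).trans ((le_abs_self _).trans (f.norm_coe_le_norm x))
  exact (le_abs_self _).trans (φ.le_opNorm_of_le hgf)

variable [MeasurableSpace K] [BorelSpace K]

lemma integrable_continuousMap (μ : Measure K) [IsFiniteMeasure μ] (f : C(K, ℝ)) :
    Integrable f μ :=
  f.continuous.integrable_of_hasCompactSupport (.of_compactSpace f)

lemma integral_eq_integral_posPart_sub_integral_negPart (μ : Measure K) [IsFiniteMeasure μ]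
    (f : C(K, ℝ)) : ∫ x, f x ∂μ = ∫ x, f⁺ x ∂μ - ∫ x, f⁻ x ∂μ := by
  rw [← integral_sub (integrable_continuousMap μ f⁺) (integrable_continuousMap μ f⁻)]
  exact integral_congr_ae (.of_forall fun x ↦ DFunLike.congr_fun (posPart_sub_negPart f).symm x)

variable [T2Space K]

lemma exists_regular_forall_nonneg_eq_integral {p : C(K, ℝ) → ℝ}
    (hp_add : ∀ f g, 0 ≤ f → 0 ≤ g → p (f + g) = p f + p g)
    (hp_smul : ∀ (c : ℝ) f, 0 ≤ c → 0 ≤ f → p (c • f) = c * p f)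
    (hp_nonneg : ∀ f, 0 ≤ f → 0 ≤ p f) :
    ∃ μ : Measure K, μ.Regular ∧ ∀ f : C(K, ℝ), 0 ≤ f → p f = ∫ x, f x ∂μ := by
  let toReal (f : CompactlySupportedContinuousMap K ℝ≥0) : C(K, ℝ) :=
    ⟨fun x ↦ (f x : ℝ), by fun_prop⟩
  have htoReal (f) : 0 ≤ toReal f := fun x ↦ (f x).2
  let Λ : CompactlySupportedContinuousMap K ℝ≥0 →ₗ[ℝ≥0] ℝ≥0 :=
    { toFun f := ⟨p (toReal f), hp_nonneg _ (htoReal f)⟩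
      map_add' f g := NNReal.eq (hp_add (toReal f) (toReal g) (htoReal f) (htoReal g))
      map_smul' c f := NNReal.eq (hp_smul c (toReal f) c.2 (htoReal f)) }
  refine ⟨NNRealRMK.rieszMeasure Λ, inferInstance, fun f hf ↦ ?_⟩
  let f' : CompactlySupportedContinuousMap K ℝ≥0 :=
    ⟨ContinuousMap.realToNNReal.comp f, .of_compactSpace _⟩
  have hf' : toReal f' = f := ContinuousMap.ext fun x ↦ Real.coe_toNNReal (f x) (hf x)
  calc p f = Λ f' := by rw [← hf']; rfl
    _ = ∫ x, toReal f' x ∂NNRealRMK.rieszMeasure Λ := (NNRealRMK.integral_rieszMeasure Λ f').symm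
    _ = ∫ x, f x ∂NNRealRMK.rieszMeasure Λ := by rw [hf']

lemma exists_regular_forall_eq_integral_sub_integral (φ : StrongDual ℝ C(K, ℝ)) :
    ∃ μ ν : Measure K, μ.Regular ∧ ν.Regular ∧
      ∀ f : C(K, ℝ), φ f = ∫ x, f x ∂μ - ∫ x, f x ∂ν := by
  have hφ := bddAbove_image_Icc_zero φ
  set p : C(K, ℝ) → ℝ := rieszKantorovich (φ : C(K, ℝ) →ₗ[ℝ] ℝ)
  have hp_add (f g : C(K, ℝ)) (hf : 0 ≤ f) (hg : 0 ≤ g) : p (f + g) = p f + p g :=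
    rieszKantorovich_add hf hg (hφ f) (hφ g)
  have hp_smul (c : ℝ) (f : C(K, ℝ)) (hc : 0 ≤ c) (_ : 0 ≤ f) : p (c • f) = c * p f :=
    rieszKantorovich_smul _ hc f
  have hp_ge (f : C(K, ℝ)) (hf : 0 ≤ f) : φ f ≤ p f :=
    le_rieszKantorovich (hφ f) (right_mem_Icc.2 hf)
  have hp_nonneg (f : C(K, ℝ)) (hf : 0 ≤ f) : 0 ≤ p f :=
    (map_zero φ).ge.trans (le_rieszKantorovich (hφ f) (left_mem_Icc.2 hf))
  obtain ⟨μ, hμ, hpμ⟩ := exists_regular_forall_nonneg_eq_integral hp_add hp_smul hp_nonneg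
  obtain ⟨ν, hν, hpν⟩ := exists_regular_forall_nonneg_eq_integral (p := fun f ↦ p f - φ f)
    (fun f g hf hg ↦ by rw [hp_add f g hf hg, map_add]; ring)
    (fun c f hc hf ↦ by rw [hp_smul c f hc hf, map_smul, smul_eq_mul]; ring)
    (fun f hf ↦ sub_nonneg.2 (hp_ge f hf))
  have hφ_cone (f : C(K, ℝ)) (hf : 0 ≤ f) : φ f = ∫ x, f x ∂μ - ∫ x, f x ∂ν := by
    rw [← hpμ f hf, ← hpν f hf, sub_sub_cancel]
  refine ⟨μ, ν, hμ, hν, fun f ↦ ?_⟩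
  calc φ f = φ f⁺ - φ f⁻ := by rw [← map_sub, posPart_sub_negPart]
    _ = ∫ x, f x ∂μ - ∫ x, f x ∂ν := by
      rw [hφ_cone _ (posPart_nonneg f), hφ_cone _ (negPart_nonneg f),
        integral_eq_integral_posPart_sub_integral_negPart μ f,
        integral_eq_integral_posPart_sub_integral_negPart ν f]
      ring

end RieszRepresentation

section EllOne

variable {ι E : Type*} [NormedAddCommGroup E] [NormedSpace ℝ E]

lemma hasSum_abs_lp_one (a : lp (fun _ : ι ↦ ℝ) 1) : HasSum (fun i ↦ |a i|) ‖a‖ := by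
  simpa using lp.hasSum_norm (p := 1) (by simp) a

/-- A family of vectors is isometrically equivalent to the standard basis of `ℓ¹`. -/
def IsIsometricEllOneFamily (v : ι → E) : Prop :=
  ∀ (a : ι → ℝ) (F : Finset ι), ‖∑ i ∈ F, a i • v i‖ = ∑ i ∈ F, |a i|

namespace IsIsometricEllOneFamily

variable [CompleteSpace E] {v : ι → E}

lemma summable_smul (hv : IsIsometricEllOneFamily v) (a : lp (fun _ : ι ↦ ℝ) 1) :
    Summable fun i ↦ a i • v i := by
  refine .of_norm ((hasSum_abs_lp_one a).summable.congr fun i ↦ ?_)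
  simpa using (hv a {i}).symm

/-- The isometric embedding `a ↦ ∑ aᵢ vᵢ` of `ℓ¹` determined by an isometric `ℓ¹` family. -/
noncomputable def toLinearIsometry (hv : IsIsometricEllOneFamily v) :
    lp (fun _ : ι ↦ ℝ) 1 →ₗᵢ[ℝ] E where
  toFun a := ∑' i, a i • v i
  map_add' a b := by
    simp only [lp.coeFn_add, Pi.add_apply, add_smul]
    exact (hv.summable_smul a).tsum_add (hv.summable_smul b)
  map_smul' c a := by
    simp only [lp.coeFn_smul, Pi.smul_apply, smul_assoc]
    exact (hv.summable_smul a).tsum_const_smul c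
  norm_map' a := by
    refine tendsto_nhds_unique (hv.summable_smul a).hasSum.norm ?_
    simp only [hv a]
    exact hasSum_abs_lp_one a

lemma hasSum_toLinearIsometry (hv : IsIsometricEllOneFamily v)
    (a : lp (fun _ : ι ↦ ℝ) 1) : HasSum (fun i ↦ a i • v i) (hv.toLinearIsometry a) :=
  (hv.summable_smul a).hasSum

end IsIsometricEllOneFamily

end EllOne

section PointMasses

variable {K : Type*} [TopologicalSpace K]

/-- The Dirac functional `δₓ` in the dual of `C(K)`. -/
noncomputable def diracDual (x : K) : StrongDual ℝ C(K, ℝ) :=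
  ContinuousMap.evalCLM ℝ x

lemma sum_smul_diracDual_apply (a : K → ℝ) (F : Finset K) (f : C(K, ℝ)) :
    (∑ x ∈ F, a x • diracDual x) f = ∑ x ∈ F, a x * f x := by
  simp [diracDual]

variable [CompactSpace K] [T2Space K]

lemma exists_norm_le_one_forall_mem_finset_eq_sign (a : K → ℝ) (F : Finset K) :
    ∃ f : C(K, ℝ), ‖f‖ ≤ 1 ∧ ∀ x ∈ F, f x = SignType.sign (a x) := by
  have : DiscreteTopology (F : Set K) := inferInstance
  let g : C((F : Set K), ℝ) := ⟨fun x ↦ SignType.sign (a x), continuous_of_discreteTopology⟩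
  have hg (x : (F : Set K)) : g x ∈ Icc (-1 : ℝ) 1 := by
    change ((SignType.sign (a x) : SignType) : ℝ) ∈ Icc (-1 : ℝ) 1
    rcases SignType.sign (a x) with _ | _ | _ <;> simp
  obtain ⟨f, hf, hfg⟩ :=
    g.exists_restrict_eq_forall_mem_of_closed hg ⟨0, by simp⟩ F.finite_toSet.isClosed
  exact ⟨f, (f.norm_le zero_le_one).2 fun x ↦ abs_le.2 (hf x),
    fun x hx ↦ DFunLike.congr_fun hfg (⟨x, hx⟩ : (F : Set K))⟩

lemma isIsometricEllOneFamily_diracDual :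
    IsIsometricEllOneFamily (diracDual : K → StrongDual ℝ C(K, ℝ)) := by
  intro a F
  apply le_antisymm
  · refine ContinuousLinearMap.opNorm_le_bound _ (F.sum_nonneg fun x _ ↦ abs_nonneg _) fun f ↦ ?_
    rw [sum_smul_diracDual_apply, Finset.sum_mul]
    refine norm_sum_le_of_le F fun x _ ↦ ?_
    rw [norm_mul]
    exact mul_le_mul_of_nonneg_left (f.norm_coe_le_norm x) (norm_nonneg _)
  · obtain ⟨f, hf, hf_sign⟩ := exists_norm_le_one_forall_mem_finset_eq_sign a F
    calc ∑ x ∈ F, |a x| = ∑ x ∈ F, a x * f x :=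
          Finset.sum_congr rfl fun x hx ↦ by rw [hf_sign x hx, self_mul_sign]
      _ = (∑ x ∈ F, a x • diracDual x) f := (sum_smul_diracDual_apply a F f).symm
      _ ≤ ‖∑ x ∈ F, a x • diracDual x‖ :=
        (le_abs_self _).trans ((∑ x ∈ F, a x • diracDual x).unit_le_opNorm f hf)

/-- The isometric embedding `a ↦ ∑ a(x) δₓ` of `ℓ¹(K)` into the dual of `C(K)`. -/
noncomputable def lpOneToDual (K : Type*) [TopologicalSpace K] [CompactSpace K] [T2Space K] :
    lp (fun _ : K ↦ ℝ) 1 →ₗᵢ[ℝ] StrongDual ℝ C(K, ℝ) :=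
  isIsometricEllOneFamily_diracDual.toLinearIsometry

lemma hasSum_lpOneToDual_apply (a : lp (fun _ : K ↦ ℝ) 1) (f : C(K, ℝ)) :
    HasSum (fun x ↦ a x * f x) (lpOneToDual K a f) :=
  (isIsometricEllOneFamily_diracDual.hasSum_toLinearIsometry a).mapL
    (ContinuousLinearMap.apply ℝ ℝ f)

lemma lpOneToDual_surjective [MeasurableSpace K] [BorelSpace K]
    (hK : ∀ (μ : Measure K) [μ.Regular], IsPurelyAtomic μ) :
    Function.Surjective (lpOneToDual K) := by
  intro φ
  obtain ⟨μ, ν, hμ, hν, hφ⟩ := exists_regular_forall_eq_integral_sub_integral φ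
  have hsum (f : C(K, ℝ)) : HasSum (fun x ↦ (μ.real {x} - ν.real {x}) * f x) (φ f) := by
    simp only [sub_mul, hφ f]
    exact ((hK μ).hasSum_integral (integrable_continuousMap μ f)).sub
      ((hK ν).hasSum_integral (integrable_continuousMap ν f))
  have hmem : Memℓp (fun x ↦ μ.real {x} - ν.real {x}) 1 :=
    memℓp_gen (by simpa using (hsum 1).summable.abs)
  exact ⟨⟨_, hmem⟩, ContinuousLinearMap.ext fun f ↦
    (hasSum_lpOneToDual_apply _ f).unique (hsum f)⟩

end PointMasses

section KadecNorms

lemma borel_inf_induced {X Y : Type*} [TopologicalSpace X] [MeasurableSpace X] [BorelSpace X]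
    [TopologicalSpace Y] [SecondCountableTopology Y] [MeasurableSpace Y] [OpensMeasurableSpace Y]
    {f : X → Y} (hf : Measurable f) :
    @borel X (‹TopologicalSpace X› ⊓ .induced f ‹TopologicalSpace Y›) = borel X := by
  refine le_antisymm (MeasurableSpace.generateFrom_le fun U hU ↦ ?_) (borel_anti inf_le_left)
  obtain ⟨B, hB_count, -, hB⟩ := TopologicalSpace.exists_countable_basis Y
  let V : Set Y → Set X := fun b ↦ ⋃₀ {W | IsOpen W ∧ W ∩ f ⁻¹' b ⊆ U}
  have hV (b) : IsOpen (V b) := isOpen_sUnion fun W hW ↦ hW.1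
  have hUV : U = ⋃ b ∈ B, V b ∩ f ⁻¹' b := by
    refine Subset.antisymm (fun x hx ↦ ?_) (iUnion₂_subset fun b _ ↦ ?_)
    · have hx_nhds : U ∈ 𝓝 x ⊓ comap f (𝓝 (f x)) := by
        rw [← nhds_induced, ← nhds_inf]
        exact @IsOpen.mem_nhds X (_ ⊓ _) x U hU hx
      obtain ⟨⟨W, b⟩, ⟨⟨hxW, hW⟩, hbB, hxb⟩, hWU⟩ :=
        ((nhds_basis_opens x).inf (hB.nhds_hasBasis.comap f)).mem_iff.1 hx_nhds
      exact mem_iUnion₂.2 ⟨b, hbB, ⟨W, ⟨hW, hWU⟩, hxW⟩, hxb⟩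
    · rintro x ⟨⟨W, ⟨-, hWU⟩, hxW⟩, hxb⟩
      exact hWU ⟨hxW, hxb⟩
  rw [hUV, ← BorelSpace.measurable_eq (α := X)]
  exact .biUnion hB_count fun b hb ↦ (hV b).measurableSet.inter (hf (hB.isOpen hb).measurableSet)

variable {ι E F : Type*} [NormedAddCommGroup E] [NormedSpace ℝ E] [NormedAddCommGroup F]
  [NormedSpace ℝ F]

lemma continuous_weakTopology (Λ : StrongDual ℝ E) : Continuous[weakTopology E, _] Λ :=
  (@continuous_pi_iff _ _ _ (weakTopology E) _ _).1 continuous_induced_dom Λ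

lemma le_weakTopology : (inferInstance : TopologicalSpace E) ≤ weakTopology E :=
  continuous_iff_le_induced.1 (continuous_pi fun Λ ↦ Λ.continuous)

lemma continuous_weakTopology_weakTopology (T : E →L[ℝ] F) :
    Continuous[weakTopology E, weakTopology F] T := by
  have h (Λ : StrongDual ℝ F) : Continuous[weakTopology E, _] fun x ↦ Λ (T x) :=
    continuous_weakTopology (Λ.comp T)
  let _ := weakTopology E
  exact continuous_induced_rng.2 (continuous_pi h)

lemma norm_le_iff_forall_strongDual_le {x : E} {r : ℝ} (hr : 0 ≤ r) :
    ‖x‖ ≤ r ↔ ∀ Λ : StrongDual ℝ E, Λ x ≤ ‖Λ‖ * r := by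
  refine ⟨fun hx Λ ↦ (le_abs_self _).trans (Λ.le_opNorm_of_le hx), fun hx ↦ ?_⟩
  obtain ⟨Λ, hΛ, hΛx⟩ := exists_dual_vector'' ℝ x
  calc ‖x‖ = Λ x := hΛx.symm
    _ ≤ ‖Λ‖ * r := hx Λ
    _ ≤ r := mul_le_of_le_one_left hr hΛ

lemma lowerSemicontinuous_norm_weakTopology :
    @LowerSemicontinuous E ℝ (weakTopology E) _ norm := by
  have hclosed (Λ : StrongDual ℝ E) (c : ℝ) : IsClosed[weakTopology E] {x | Λ x ≤ c} :=
    @IsClosed.preimage _ _ (weakTopology E) _ _ (continuous_weakTopology Λ) _ isClosed_Iic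
  have hball {r : ℝ} (hr : 0 ≤ r) :
      norm ⁻¹' Iic r = ⋂ Λ : StrongDual ℝ E, {x | Λ x ≤ ‖Λ‖ * r} := by
    ext x
    rw [mem_iInter]
    exact norm_le_iff_forall_strongDual_le hr
  refine (@lowerSemicontinuous_iff_isClosed_preimage _ (weakTopology E) _ _ _).2 fun r ↦ ?_
  rcases lt_or_ge r 0 with hr | hr
  · have hempty : (norm : E → ℝ) ⁻¹' Iic r = ∅ :=
      eq_empty_of_forall_notMem fun x hx ↦ ((mem_Iic.1 hx).trans_lt hr).not_ge (norm_nonneg x)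
    rw [hempty]
    exact @isClosed_empty E (weakTopology E)
  · rw [hball hr]
    exact @isClosed_iInter E _ (weakTopology E) _ fun Λ ↦ hclosed Λ _

/-- The Kadec property of a norm: on the unit sphere the weak and norm topologies agree. It is
encoded by saying that the weak topology together with continuity of the norm generates the norm
topology, i.e. `x_i → x` weakly and `‖x_i‖ → ‖x‖` imply `x_i → x`. -/
def HasKadecNorm (E : Type*) [NormedAddCommGroup E] [NormedSpace ℝ E] : Prop :=
  weakTopology E ⊓ .induced norm inferInstance ≤ (inferInstance : TopologicalSpace E)

lemma HasKadecNorm.borel_weakTopology_eq (hE : HasKadecNorm E) :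
    @borel E (weakTopology E) = borel E := by
  refine le_antisymm (borel_anti le_weakTopology) ((borel_anti hE).trans_eq ?_)
  let _ := weakTopology E
  let _ : MeasurableSpace E := borel E
  have : BorelSpace E := ⟨rfl⟩
  exact borel_inf_induced lowerSemicontinuous_norm_weakTopology.measurable

lemma HasKadecNorm.of_linearIsometry (hF : HasKadecNorm F) (e : E →ₗᵢ[ℝ] F) :
    HasKadecNorm E := by
  rw [HasKadecNorm, e.isometry.isUniformInducing.isInducing.eq_induced]
  refine le_trans ?_ (induced_mono hF)
  rw [induced_inf, induced_compose]
  refine inf_le_inf ?_ (le_of_eq ?_)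
  · exact continuous_iff_le_induced.1 (continuous_weakTopology_weakTopology e.toContinuousLinearMap)
  · exact congrArg (TopologicalSpace.induced · _) (funext fun x ↦ (e.norm_map x).symm)

lemma norm_lp_one_sub_le (x y : lp (fun _ : ι ↦ ℝ) 1) (F : Finset ι) :
    ‖y - x‖ ≤ 2 * ∑ i ∈ F, |y i - x i| + (‖y‖ - ‖x‖) + 2 * (‖x‖ - ∑ i ∈ F, |x i|) := by
  have hsum : HasSum (fun i ↦ |y i| + |x i| - |y i - x i|) (‖y‖ + ‖x‖ - ‖y - x‖) :=
    ((hasSum_abs_lp_one y).add (hasSum_abs_lp_one x)).sub (hasSum_abs_lp_one (y - x))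
  have hF : ∑ i ∈ F, (2 * |x i| - 2 * |y i - x i|) ≤ ‖y‖ + ‖x‖ - ‖y - x‖ := by
    calc ∑ i ∈ F, (2 * |x i| - 2 * |y i - x i|) ≤ ∑ i ∈ F, (|y i| + |x i| - |y i - x i|) := by
          refine Finset.sum_le_sum fun i _ ↦ ?_
          have := abs_sub_abs_le_abs_sub (x i) (y i)
          rw [abs_sub_comm] at this
          linarith
      _ ≤ ‖y‖ + ‖x‖ - ‖y - x‖ :=
        sum_le_hasSum F (fun i _ ↦ sub_nonneg.2 (abs_sub (y i) (x i))) hsum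
  rw [Finset.sum_sub_distrib, ← Finset.mul_sum, ← Finset.mul_sum] at hF
  linarith

lemma hasKadecNorm_lp_one : HasKadecNorm (lp (fun _ : ι ↦ ℝ) 1) := by
  set t : TopologicalSpace (lp (fun _ : ι ↦ ℝ) 1) := weakTopology _ ⊓ .induced norm inferInstance
  refine le_of_nhds_le_nhds fun x ↦ Metric.nhds_basis_ball.ge_iff.2 fun ε hε ↦ ?_
  obtain ⟨F, hF⟩ : ∃ F : Finset ι, ‖x‖ - ε / 2 < ∑ i ∈ F, |x i| :=
    ((hasSum_abs_lp_one x).eventually_const_lt (sub_lt_self _ (half_pos hε))).exists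
  let g (y : lp (fun _ : ι ↦ ℝ) 1) : ℝ :=
    2 * ∑ i ∈ F, |y i - x i| + (‖y‖ - ‖x‖) + 2 * (‖x‖ - ∑ i ∈ F, |x i|)
  have hnorm : Continuous[t, _] (norm : lp (fun _ : ι ↦ ℝ) 1 → ℝ) :=
    continuous_le_dom inf_le_right continuous_induced_dom
  have hcoord (i : ι) : Continuous[t, _] fun y : lp (fun _ : ι ↦ ℝ) 1 ↦ y i :=
    continuous_le_dom inf_le_left (continuous_weakTopology (lp.evalCLM ℝ (fun _ ↦ ℝ) 1 i))
  have hg : Continuous[t, _] g := by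
    let _ := t
    exact ((continuous_const.mul (continuous_finsetSum F fun i _ ↦
      ((hcoord i).sub continuous_const).abs)).add (hnorm.sub continuous_const)).add continuous_const
  have hgx : g x < ε := by
    simp only [g, sub_self, abs_zero, Finset.sum_const_zero, mul_zero, zero_add]
    linarith
  filter_upwards [hg.continuousAt.eventually_lt_const hgx] with y hy
  rw [mem_ball_iff_norm]
  exact (norm_lp_one_sub_le x y F).trans_lt hy

end KadecNorms

section DualOfContinuousFunctions

variable {K : Type*} [TopologicalSpace K] [CompactSpace K] [T2Space K] [MeasurableSpace K]
  [BorelSpace K]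

lemma hasKadecNorm_strongDual_continuousMap
    (hK : ∀ (μ : Measure K) [μ.Regular], IsPurelyAtomic μ) :
    HasKadecNorm (StrongDual ℝ C(K, ℝ)) :=
  hasKadecNorm_lp_one.of_linearIsometry
    (LinearIsometryEquiv.ofSurjective (lpOneToDual K)
      (lpOneToDual_surjective hK)).symm.toLinearIsometry

theorem weakStar_borel_eq_norm_borel_of_eq_weak_borel_general
    (hK : ∀ (μ : Measure K) [μ.Regular], IsPurelyAtomic μ)
    (h : @borel (StrongDual ℝ C(K, ℝ)) (weakStarTopology C(K, ℝ)) =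
      @borel (StrongDual ℝ C(K, ℝ)) (weakTopology (StrongDual ℝ C(K, ℝ)))) :
    @borel (StrongDual ℝ C(K, ℝ)) (weakStarTopology C(K, ℝ)) = borel (StrongDual ℝ C(K, ℝ)) :=
  h.trans (hasKadecNorm_strongDual_continuousMap hK).borel_weakTopology_eq

end DualOfContinuousFunctions

/-- Let `K` be a compact Hausdorff space all of whose subsets are Borel.
If the weak-star and weak Borel σ-algebras of `C*(K)` coincide, then the weak-star and
norm Borel σ-algebras coincide. -/
theorem weakStar_borel_eq_norm_borel_of_eq_weak_borel
    (K : Type*) [TopologicalSpace K] [CompactSpace K] [T2Space K]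
    (hB : ∀ s : Set K, MeasurableSet[borel K] s)
    (h : @borel (StrongDual ℝ C(K, ℝ)) (weakStarTopology C(K, ℝ)) =
      @borel (StrongDual ℝ C(K, ℝ)) (weakTopology (StrongDual ℝ C(K, ℝ)))) :
    @borel (StrongDual ℝ C(K, ℝ)) (weakStarTopology C(K, ℝ)) = borel (StrongDual ℝ C(K, ℝ)) := by
  let _ : MeasurableSpace K := borel K
  have : BorelSpace K := ⟨rfl⟩
  exact weakStar_borel_eq_norm_borel_of_eq_weak_borel_general
    (fun μ _ ↦ isPurelyAtomic_of_forall_nullMeasurableSet fun s ↦ (hB s).nullMeasurableSet) h
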